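/- Let n ≥ 2. The order chromatic number χ'_<(D_n) is finite, but for every edge-ordering D* of the underlying simple graph of D_n that is not isomorphic (as an edge-ordered graph) to D_n, the order chromatic number χ'_<(D*) is infinite. -/

import Mathlib

/-- An edge-ordered graph: a finite simple graph on vertex set `Fin nv`
together with a labeling of (potential) edges.  The edge-order is the order of
the labels; the labeling is required to be injective on the edge set via
`EOGraph.Valid`. -/
structure EOGraph where
  nv : ℕ
  graph : SimpleGraph (Fin nv)
  label : Sym2 (Fin nv) → ℕ

namespace EOGraph

/-- The labeling is injective on the edge set, hence defines a linear order on the edges. -/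
def Valid (G : EOGraph) : Prop :=
  ∀ e ∈ G.graph.edgeSet, ∀ f ∈ G.graph.edgeSet, G.label e = G.label f → e = f

/-- The number of edges of an edge-ordered graph. -/
noncomputable def edges (G : EOGraph) : ℕ := G.graph.edgeSet.ncard

/-- `G.Contains H`: some subgraph of `G`, with the edge-order induced from `G`,
is isomorphic to `H` (via a graph isomorphism preserving the relative order of edges). -/
def Contains (G H : EOGraph) : Prop :=
  ∃ f : Fin H.nv ↪ Fin G.nv,
    (∀ a b, H.graph.Adj a b → G.graph.Adj (f a) (f b)) ∧
    ∀ a b c d, H.graph.Adj a b → H.graph.Adj c d →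
      (H.label s(a, b) < H.label s(c, d) ↔ G.label s(f a, f b) < G.label s(f c, f d))

/-- `G` avoids `H` if no subgraph of `G` (with the induced edge-order) is isomorphic to `H`. -/
def Avoids (G H : EOGraph) : Prop := ¬ G.Contains H

/-- `G` avoids a family if it avoids every member. -/
def AvoidsFam (G : EOGraph) (F : Set EOGraph) : Prop := ∀ H ∈ F, G.Avoids H

/-- Isomorphism of edge-ordered graphs. -/
def Iso (G H : EOGraph) : Prop :=
  ∃ f : Fin G.nv ≃ Fin H.nv,
    (∀ a b, G.graph.Adj a b ↔ H.graph.Adj (f a) (f b)) ∧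
    ∀ a b c d, G.graph.Adj a b → G.graph.Adj c d →
      (G.label s(a, b) < G.label s(c, d) ↔ H.label s(f a, f b) < H.label s(f c, f d))

end EOGraph

/-- A simple graph `G` can avoid the family `F` if some linear order on its edges
(given by a labeling injective on the edge set) makes it into an edge-ordered graph
avoiding `F`. -/
def CanAvoid {n : ℕ} (G : SimpleGraph (Fin n)) (F : Set EOGraph) : Prop :=
  ∃ L : Sym2 (Fin n) → ℕ, (EOGraph.mk n G L).Valid ∧ (EOGraph.mk n G L).AvoidsFam F

/-- The order chromatic number of a family of edge-ordered graphs: the least chromatic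
number of a finite simple graph that cannot avoid the family (`⊤` if every finite
simple graph can avoid it). -/
noncomputable def orderChrom (F : Set EOGraph) : ℕ∞ :=
  ⨅ (n : ℕ) (G : SimpleGraph (Fin n)) (_ : ¬ CanAvoid G F), G.chromaticNumber

/-- The Turán number `lex(n, F)`: the maximum number of edges of an edge-ordered graph
on `n` vertices avoiding the family `F`. -/
noncomputable def lexFam (n : ℕ) (F : Set EOGraph) : ℕ :=
  sSup {m : ℕ | ∃ G : EOGraph, G.nv = n ∧ G.Valid ∧ G.AvoidsFam F ∧ G.edges = m}

/-- Build a symmetric labeling from a function of the (min, max) of the two endpoints. -/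
def symLabel {N : ℕ} (f : Fin N → Fin N → ℕ) : Sym2 (Fin N) → ℕ :=
  Sym2.lift ⟨fun a b => f (min a b) (max a b), fun a b => by
    show f (min a b) (max a b) = f (min b a) (max b a)
    rw [min_comm, max_comm]⟩

/-- The edge-ordered path on `k` vertices `0, 1, …, k-1`, where the edge `{i, i+1}`
gets label `l[i]`. -/
def pathEO (k : ℕ) (l : List ℕ) : EOGraph where
  nv := k
  graph := SimpleGraph.fromRel (fun a b => (a : ℕ) + 1 = (b : ℕ))
  label := symLabel fun a _ => l.getD (a : ℕ) 0

/-- The underlying simple graph of `D_n`: vertices `0,…,n-1` (standing for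
`x_1,…,x_n`), the edges being exactly the pairs incident to `x_1 = 0` or to
`x_n = n-1`. -/
def Dunder (n : ℕ) : SimpleGraph (Fin n) :=
  SimpleGraph.fromRel fun a b => (a : ℕ) = 0 ∨ (b : ℕ) = n - 1

/-- The edge-ordered graph `D_n` with edge-order
`x_1x_2 < x_1x_3 < ⋯ < x_1x_n < x_2x_n < ⋯ < x_{n-1}x_n`. -/
def Dgraph (n : ℕ) : EOGraph where
  nv := n
  graph := Dunder n
  label := symLabel fun a b => if (a : ℕ) = 0 then (b : ℕ) else (n - 1) + (a : ℕ)

/-! Write a triangle of an ordered complete graph as `i < j < k`. By Ramsey's theorem for triples,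
every edge-ordering of a large complete graph has an ordered complete subgraph all of whose
triangles order `ij`, `ik`, `jk` in the same way. In each of the possible ways the subgraph contains
`D_n`: with its vertices as they stand, cyclically shifted by one, or one of these after reversal.

Conversely, let `D*` be an edge-ordering of the graph of `D_n`, with hubs `P` and `Q`, that some
graph `G` cannot avoid, so that `D*` embeds into every edge-ordering of the complete graph on the
vertices of `G`. The min ordering gives, up to exchanging the hubs, `Pu < Qu` for all other
vertices `u`. Hence in the inverse min ordering `P` comes first, or `P` and `Q` come last with
`Q < P`; in the inverse max ordering `Q` comes last, or `P` and `Q` come first with `Q < P`. If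
`n ≥ 4`, these two embeddings are compatible only when `P` comes first in the one and `Q` last in
the other, and then they determine the order of `D*`. If `n ≤ 3`, the graph of `D_n` is complete
with at most one triangle, and the first argument applies to `D*` itself. -/

section Ramsey

open Filter

theorem exists_strictMono_color_eq_init {C : Type*} [Finite C] {r : ℕ}
    (c : (Fin (r + 1) → ℕ) → C) :
    ∃ (d : (Fin r → ℕ) → C) (x : ℕ → ℕ), StrictMono x ∧
      ∀ s, StrictMono s → c (x ∘ s) = d (x ∘ Fin.init s) := by
  have limit_color (t : Fin r → ℕ) : ∃ a, ∀ᶠ y in hyperfilter ℕ, c (Fin.snoc t y) = a :=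
    Ultrafilter.eventually_exists_iff.1 (Eventually.of_forall fun _ => exists_eq')
  choose d hd using limit_color
  have extend (T : Finset ℕ) :
      ∃ y, ∀ a ∈ T, a < y ∧ ∀ t ∈ Set.Icc 0 (fun _ => a), c (Fin.snoc t y) = d t := by
    refine Eventually.exists (f := (hyperfilter ℕ : Filter ℕ)) ?_
    refine (eventually_all_finset T).2 fun a _ => Eventually.and ?_ ?_
    · exact Nat.hyperfilter_le_atTop (eventually_gt_atTop a)
    · exact (eventually_all_finite (Set.finite_Icc _ _)).2 fun t _ => hd t
  obtain ⟨x, -, hx⟩ := exists_seq_of_forall_finset_exists (fun _ => True)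
    (fun a y => a < y ∧ ∀ t ∈ Set.Icc (0 : Fin r → ℕ) (fun _ => a), c (Fin.snoc t y) = d t)
    fun T _ => (extend T).imp fun _ hy => ⟨trivial, hy⟩
  have x_mono : StrictMono x := fun a b hab => (hx a b hab).1
  -- Dropping `x 0` leaves a term below every tuple, so tuples of length one need no extra case.
  refine ⟨d, fun a => x (a + 1), fun _ _ hab => x_mono (Nat.succ_lt_succ hab), fun s hs => ?_⟩
  have key := (hx (s (Fin.last r)) (s (Fin.last r) + 1) (Nat.lt_succ_self _)).2
    (fun i => x (s i.castSucc + 1))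
    ⟨fun _ => Nat.zero_le _, fun i => x_mono.monotone (hs i.castSucc_lt_last)⟩
  refine Eq.trans (congrArg c (funext fun i => ?_)) key
  cases i using Fin.lastCases <;> simp

theorem exists_strictMono_color_const {C : Type*} [Finite C] {r : ℕ} (c : (Fin r → ℕ) → C) :
    ∃ x : ℕ → ℕ, StrictMono x ∧ ∃ c₀, ∀ s : Fin r → ℕ, StrictMono s → c (x ∘ s) = c₀ := by
  induction r with
  | zero => exact ⟨id, strictMono_id, c ![], fun s _ => congrArg c (Subsingleton.elim _ _)⟩
  | succ r ih =>
    obtain ⟨d, x, hx, hcd⟩ := exists_strictMono_color_eq_init c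
    obtain ⟨y, hy, c₀, hd⟩ := ih fun t => d (x ∘ t)
    exact ⟨x ∘ y, hx.comp hy, c₀, fun s hs => (hcd (y ∘ s) (hy.comp hs)).trans
      (hd (Fin.init s) (hs.comp Fin.strictMono_castSucc))⟩

theorem strictMono_snoc {α : Type*} [Preorder α] {r : ℕ} {s : Fin r → α} {a : α}
    (hs : StrictMono s) (ha : ∀ i, s i < a) : StrictMono (Fin.snoc s a : Fin (r + 1) → α) := by
  intro i j hij
  cases j using Fin.lastCases with
  | last =>
    obtain ⟨i, rfl⟩ := Fin.exists_castSucc_eq.2 hij.ne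
    simpa using ha i
  | cast j =>
    obtain ⟨i, rfl⟩ := Fin.exists_castSucc_eq.2 (hij.trans j.castSucc_lt_last).ne
    simpa using hs (Fin.castSucc_lt_castSucc_iff.1 hij)

-- If every `N` had a bad coloring, then coloring `(t, N)` by the `N`-th bad color of `t` would
-- contradict the infinite theorem for `(r + 1)`-tuples.
theorem exists_orderEmbedding_color_const (C : Type*) [Finite C] (r m : ℕ) :
    ∃ N, ∀ c : (Fin r → Fin N) → C, ∃ f : Fin m ↪o Fin N,
      ∀ s t, StrictMono s → StrictMono t → c (f ∘ s) = c (f ∘ t) := by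
  classical
  by_contra! h
  choose c hc using h
  let extended (N : ℕ) (t : Fin r → ℕ) : Option C :=
    if ht : ∀ i, t i < N then some (c N fun i => ⟨t i, ht i⟩) else none
  obtain ⟨x, hx, c₀, hc₀⟩ := exists_strictMono_color_const (r := r + 1)
    fun t => extended (t (Fin.last r)) (Fin.init t)
  let f : Fin m ↪o Fin (x m) :=
    OrderEmbedding.ofStrictMono (fun i => ⟨x i, hx i.isLt⟩) fun _ _ hij => hx hij
  have color_f (s : Fin r → Fin m) (hs : StrictMono s) : some (c (x m) (f ∘ s)) = c₀ := by
    have below (i : Fin r) : (s i : ℕ) < m := (s i).isLt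
    rw [← hc₀ _ (strictMono_snoc (Fin.val_strictMono.comp hs) below)]
    simp only [extended, Fin.comp_snoc, Fin.snoc_last, Fin.init_snoc, Function.comp_apply]
    rw [dif_pos fun i => hx (below i)]
    rfl
  obtain ⟨s, t, hs, ht, hst⟩ := hc (x m) f
  exact hst (Option.some_injective _ ((color_f s hs).trans (color_f t ht).symm))

end Ramsey

section EdgeOrder

variable {α β : Type*}

/-- Two labelings, possibly valued in different orders, induce the same order on `S`. -/
def SameOrderOn {X : Type*} [LT α] [LT β] (S : Set X) (f : X → α) (g : X → β) : Prop :=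
  ∀ ⦃x⦄, x ∈ S → ∀ ⦃y⦄, y ∈ S → (f x < f y ↔ g x < g y)

theorem EOGraph.contains_iff {G H : EOGraph} :
    G.Contains H ↔ ∃ f : Fin H.nv ↪ Fin G.nv,
      (∀ a b, H.graph.Adj a b → G.graph.Adj (f a) (f b)) ∧
        SameOrderOn H.graph.edgeSet H.label (G.label ∘ Sym2.map f) := by
  refine exists_congr fun f => and_congr_right fun _ => ⟨fun h e he e' he' => ?_, ?_⟩
  · induction e with | _ a b
    induction e' with | _ c d
    exact h a b c d he he'
  · exact fun h a b c d hab hcd => h (x := s(a, b)) hab (y := s(c, d)) hcd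

theorem EOGraph.iso_iff {G H : EOGraph} :
    G.Iso H ↔ ∃ f : G.graph ≃g H.graph,
      SameOrderOn G.graph.edgeSet G.label (H.label ∘ Sym2.map f) := by
  constructor
  · rintro ⟨f, hadj, h⟩
    refine ⟨⟨f, fun {a b} => (hadj a b).symm⟩, fun e he e' he' => ?_⟩
    induction e with | _ a b
    induction e' with | _ c d
    exact h a b c d he he'
  · rintro ⟨f, h⟩
    exact ⟨f.toEquiv, fun _ _ => f.map_adj_iff.symm, fun a b c d hab hcd =>
      h (x := s(a, b)) hab (y := s(c, d)) hcd⟩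

theorem exists_nat_sameOrderOn {X : Type*} [Finite X] [LinearOrder α] (κ : X → α) :
    ∃ rank : X → ℕ, SameOrderOn Set.univ rank κ := by
  classical
  have := Fintype.ofFinite X
  let toFin := ((Finset.univ.image κ).orderIsoOfFin rfl).symm
  exact ⟨fun x => toFin ⟨κ x, by simp⟩, fun x _ y _ => toFin.lt_iff_lt⟩

theorem exists_embedding_of_not_canAvoid [LinearOrder α] {N : ℕ} {G : SimpleGraph (Fin N)}
    {H : EOGraph} (hG : ¬ CanAvoid G {H}) {κ : Sym2 (Fin N) → α} (hκ : Function.Injective κ) :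
    ∃ f : Fin H.nv ↪ Fin N, SameOrderOn H.graph.edgeSet H.label (κ ∘ Sym2.map f) := by
  obtain ⟨rank, hrank⟩ := exists_nat_sameOrderOn κ
  have valid : (EOGraph.mk N G rank).Valid := fun e _ e' _ h => hκ <| le_antisymm
    (not_lt.1 fun hlt => h.not_gt ((hrank trivial trivial).2 hlt))
    (not_lt.1 fun hlt => h.not_lt ((hrank trivial trivial).2 hlt))
  have contains : (EOGraph.mk N G rank).Contains H := by
    by_contra h
    exact hG ⟨rank, valid, fun _ hH => hH ▸ h⟩
  obtain ⟨f, -, hf⟩ := EOGraph.contains_iff.1 contains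
  exact ⟨f, fun e he e' he' => (hf he he').trans (hrank trivial trivial)⟩

theorem orderChrom_eq_top_iff {F : Set EOGraph} :
    orderChrom F = ⊤ ↔ ∀ n (G : SimpleGraph (Fin n)), CanAvoid G F := by
  simp only [orderChrom, iInf_eq_top]
  refine forall₂_congr fun n G => ⟨fun h => by_contra fun hG => ?_, fun h hG => absurd h hG⟩
  exact SimpleGraph.chromaticNumber_ne_top_iff_exists.2 ⟨_, G.colorable_of_fintype⟩ (h hG)

end EdgeOrder

section DGraph

variable {α β V : Type*} {m : ℕ}

/-- `P` and `Q` are distinct, and the edges of `G` are exactly the pairs meeting `{P, Q}`. In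
`D_n` these are the vertices `x_1` and `x_n`. -/
def IsHubPair (G : SimpleGraph V) (P Q : V) : Prop :=
  P ≠ Q ∧ ∀ a b, G.Adj a b ↔ a ≠ b ∧ (a = P ∨ b = P ∨ a = Q ∨ b = Q)

namespace IsHubPair

variable {G : SimpleGraph V} {P Q : V}

protected theorem symm (h : IsHubPair G P Q) : IsHubPair G Q P :=
  ⟨h.1.symm, fun a b => by rw [h.2]; tauto⟩

theorem mem_edgeSet_left (h : IsHubPair G P Q) {u : V} (hu : u ≠ P) : s(P, u) ∈ G.edgeSet :=
  (h.2 P u).2 ⟨hu.symm, .inl rfl⟩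

theorem mem_edgeSet_right (h : IsHubPair G P Q) {u : V} (hu : u ≠ Q) : s(Q, u) ∈ G.edgeSet :=
  h.symm.mem_edgeSet_left hu

theorem edge_cases (h : IsHubPair G P Q) {e : Sym2 V} (he : e ∈ G.edgeSet) :
    (∃ u ≠ P, e = s(P, u)) ∨ ∃ u, u ≠ P ∧ u ≠ Q ∧ e = s(u, Q) := by
  induction e with | _ a b
  obtain ⟨hab, hubs⟩ := (h.2 a b).1 he
  by_cases ha : a = P
  · exact .inl ⟨b, ha ▸ hab.symm, by rw [ha]⟩
  by_cases hb : b = P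
  · exact .inl ⟨a, ha, by rw [hb, Sym2.eq_swap]⟩
  rcases hubs with rfl | rfl | rfl | rfl
  · exact absurd rfl ha
  · exact absurd rfl hb
  · exact .inr ⟨b, hb, hab.symm, Sym2.eq_swap⟩
  · exact .inr ⟨a, ha, hab, rfl⟩

end IsHubPair

theorem isHubPair_Dunder (m : ℕ) : IsHubPair (Dunder (m + 2)) 0 (Fin.last (m + 1)) := by
  refine ⟨Fin.last_pos.ne, fun a b => ?_⟩
  simp only [Dunder, SimpleGraph.fromRel_adj, Fin.ext_iff, Fin.val_zero, Fin.val_last]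
  grind

theorem Dunder_edge_cases {e : Sym2 (Fin (m + 2))} (he : e ∈ (Dunder (m + 2)).edgeSet) :
    (∃ i, 0 < i ∧ e = s(0, i)) ∨
      ∃ i, 0 < i ∧ i < Fin.last (m + 1) ∧ e = s(i, Fin.last (m + 1)) :=
  ((isHubPair_Dunder m).edge_cases he).imp
    (fun ⟨i, hi, heq⟩ => ⟨i, Fin.pos_of_ne_zero hi, heq⟩)
    fun ⟨i, hi, hi', heq⟩ => ⟨i, Fin.pos_of_ne_zero hi, Fin.lt_last_iff_ne_last.2 hi', heq⟩

theorem Dgraph_label_zero (i : Fin (m + 2)) :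
    (Dgraph (m + 2)).label s((0 : Fin (m + 2)), i) = i := by
  change (if ((0 ⊓ i : Fin (m + 2)) : ℕ) = 0 then ((0 ⊔ i : Fin (m + 2)) : ℕ) else
    m + 1 + ((0 ⊓ i : Fin (m + 2)) : ℕ)) = i
  simp

theorem Dgraph_label_last (i : Fin (m + 2)) :
    (Dgraph (m + 2)).label s(i, Fin.last (m + 1)) = m + 1 + i := by
  change (if ((i ⊓ Fin.last _ : Fin (m + 2)) : ℕ) = 0 then
    ((i ⊔ Fin.last _ : Fin (m + 2)) : ℕ) else m + 1 + ((i ⊓ Fin.last _ : Fin (m + 2)) : ℕ)) = _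
  rw [inf_eq_left.2 i.le_last, sup_eq_right.2 i.le_last, Fin.val_last]
  split_ifs <;> omega

/-- The edge orders of `D_{m+2}` in the vertex numbering `0, …, m + 1`. The edge joining the two
hubs belongs to both monotone families, so every edge at `0` precedes every other edge. -/
def IsDLabeling [Preorder α] (M : Sym2 (Fin (m + 2)) → α) : Prop :=
  StrictMonoOn (fun i => M s(0, i)) (Set.Ioi 0) ∧
    StrictMonoOn (fun i => M s(i, Fin.last (m + 1))) (Set.Iio (Fin.last (m + 1)))

theorem isDLabeling_Dgraph_label : IsDLabeling (m := m) (Dgraph (m + 2)).label := by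
  constructor <;> intro i _ j _ hij
  · exact (Dgraph_label_zero i).trans_lt
      ((Fin.lt_def.1 hij).trans_eq (Dgraph_label_zero j).symm)
  · exact (Dgraph_label_last i).trans_lt
      ((Nat.add_lt_add_left hij _).trans_eq (Dgraph_label_last j).symm)

namespace IsDLabeling

theorem zero_lt_last [Preorder α] {M : Sym2 (Fin (m + 2)) → α} (hM : IsDLabeling M)
    {i j : Fin (m + 2)} (hi : 0 < i) (hj : 0 < j) (hj' : j < Fin.last (m + 1)) :
    M s(0, i) < M s(j, Fin.last (m + 1)) :=
  (hM.1.monotoneOn hi Fin.last_pos i.le_last).trans_lt (hM.2 Fin.last_pos hj' hj)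

theorem sameOrderOn [LinearOrder α] [LinearOrder β] {M : Sym2 (Fin (m + 2)) → α}
    {M' : Sym2 (Fin (m + 2)) → β} (hM : IsDLabeling M) (hM' : IsDLabeling M') :
    SameOrderOn (Dunder (m + 2)).edgeSet M M' := by
  intro e he e' he'
  obtain ⟨i, hi, rfl⟩ | ⟨i, hi, hi', rfl⟩ := Dunder_edge_cases he <;>
  obtain ⟨j, hj, rfl⟩ | ⟨j, hj, hj', rfl⟩ := Dunder_edge_cases he'
  · exact (hM.1.lt_iff_lt hi hj).trans (hM'.1.lt_iff_lt hi hj).symm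
  · exact iff_of_true (hM.zero_lt_last hi hj hj') (hM'.zero_lt_last hi hj hj')
  · exact iff_of_false (hM.zero_lt_last hj hi hi').asymm (hM'.zero_lt_last hj hi hi').asymm
  · exact (hM.2.lt_iff_lt hi' hj').trans (hM'.2.lt_iff_lt hi' hj').symm

theorem contains {G : EOGraph} {f : Fin (m + 2) ↪ Fin G.nv}
    (hadj : ∀ a b, (Dunder (m + 2)).Adj a b → G.graph.Adj (f a) (f b))
    (hf : IsDLabeling (G.label ∘ Sym2.map f)) : G.Contains (Dgraph (m + 2)) :=
  EOGraph.contains_iff.2 ⟨f, hadj, isDLabeling_Dgraph_label.sameOrderOn hf⟩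

end IsDLabeling

/-- The edge order of `D_n` with `P` and `Q` in the roles of `x_1` and `x_n`, stated without
numbering the other vertices: that numbering is read off from the edges at `P`. -/
structure IsDOrderAt [LT α] (L : Sym2 V → α) (P Q : V) : Prop where
  left_lt_hub : ∀ ⦃u⦄, u ≠ P → u ≠ Q → L s(P, u) < L s(P, Q)
  hub_lt_right : ∀ ⦃u⦄, u ≠ P → u ≠ Q → L s(P, Q) < L s(Q, u)
  right_lt_right : ∀ ⦃u v⦄, u ≠ P → u ≠ Q → v ≠ P → v ≠ Q →
    L s(P, u) < L s(P, v) → L s(Q, u) < L s(Q, v)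

theorem exists_perm_strictMono [LinearOrder α] {κ : Fin (m + 1) → α} (hκ : Function.Injective κ)
    {P Q : Fin (m + 1)} (hP : ∀ v, κ P ≤ κ v) (hQ : ∀ v, κ v ≤ κ Q) :
    ∃ σ : Equiv.Perm (Fin (m + 1)), StrictMono (κ ∘ σ) ∧ σ 0 = P ∧ σ (Fin.last m) = Q := by
  have mono := Tuple.monotone_sort κ
  refine ⟨Tuple.sort κ, mono.strictMono_of_injective (hκ.comp (Tuple.sort κ).injective),
    hκ (le_antisymm ?_ (hP _)), hκ (le_antisymm (hQ _) ?_)⟩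
  · simpa using mono (Fin.zero_le ((Tuple.sort κ).symm P))
  · simpa using mono (Fin.le_last ((Tuple.sort κ).symm Q))

theorem exists_perm_strictMonoOn_Ioi [LinearOrder α] {κ : Fin (m + 1) → α} {P Q : Fin (m + 1)}
    (hPQ : P ≠ Q) (hκ : Set.InjOn κ {P}ᶜ) (hQ : ∀ v, v ≠ P → κ v ≤ κ Q) :
    ∃ σ : Equiv.Perm (Fin (m + 1)),
      StrictMonoOn (κ ∘ σ) (Set.Ioi 0) ∧ σ 0 = P ∧ σ (Fin.last m) = Q := by
  let extended (v : Fin (m + 1)) : WithBot α := if v = P then ⊥ else κ v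
  have extended_of_ne {v} (hv : v ≠ P) : extended v = κ v := if_neg hv
  have extended_inj : Function.Injective extended := by
    intro u v huv
    by_cases hu : u = P <;> by_cases hv : v = P
    · rw [hu, hv]
    · simp [extended, hu, hv] at huv
    · simp [extended, hu, hv] at huv
    · rw [extended_of_ne hu, extended_of_ne hv, WithBot.coe_inj] at huv
      exact hκ hu hv huv
  have extended_le (v) : extended v ≤ extended Q := by
    by_cases hv : v = P
    · simp [extended, hv]
    · rw [extended_of_ne hv, extended_of_ne hPQ.symm, WithBot.coe_le_coe]
      exact hQ v hv
  obtain ⟨σ, hσ, rfl, rfl⟩ :=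
    exists_perm_strictMono extended_inj (P := P) (by simp [extended]) extended_le
  refine ⟨σ, fun i hi j hj hij => ?_, rfl, rfl⟩
  have := hσ hij
  rwa [Function.comp, Function.comp, extended_of_ne (σ.injective.ne (ne_of_gt hi)),
    extended_of_ne (σ.injective.ne (ne_of_gt hj)), WithBot.coe_lt_coe] at this

theorem IsDOrderAt.exists_perm_isDLabeling [LinearOrder α] {L : Sym2 (Fin (m + 2)) → α}
    {P Q : Fin (m + 2)} (h : IsDOrderAt L P Q) (hPQ : P ≠ Q)
    (hinj : Set.InjOn (fun v => L s(P, v)) {P}ᶜ) :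
    ∃ σ : Equiv.Perm (Fin (m + 2)), σ 0 = P ∧ σ (Fin.last (m + 1)) = Q ∧
      IsDLabeling (L ∘ Sym2.map σ) := by
  have le_hub (v) (hv : v ≠ P) : L s(P, v) ≤ L s(P, Q) := by
    rcases eq_or_ne v Q with rfl | hQ
    · rfl
    · exact (h.left_lt_hub hv hQ).le
  obtain ⟨σ, hσ, rfl, rfl⟩ := exists_perm_strictMonoOn_Ioi hPQ hinj le_hub
  refine ⟨σ, rfl, rfl, hσ, fun i hi j hj hij => ?_⟩
  have inner {k : Fin (m + 2)} (hk : 0 < k) (hk' : k < Fin.last (m + 1)) :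
      σ k ≠ σ 0 ∧ σ k ≠ σ (Fin.last (m + 1)) := ⟨σ.injective.ne hk.ne', σ.injective.ne hk'.ne⟩
  have hj_pos : 0 < j := (Fin.zero_le i).trans_lt hij
  have hj_inner := inner hj_pos hj
  simp only [Function.comp_apply, Sym2.map_mk, Sym2.eq_swap (b := σ (Fin.last (m + 1)))]
  rcases (Fin.zero_le i).eq_or_lt with rfl | hi_pos
  · rw [Sym2.eq_swap]
    exact h.hub_lt_right hj_inner.1 hj_inner.2
  · have hi_inner := inner hi_pos hi
    exact h.right_lt_right hi_inner.1 hi_inner.2 hj_inner.1 hj_inner.2 (hσ hi_pos hj_pos hij)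

theorem IsDOrderAt.exists_aut_isDLabeling [LinearOrder α] {L : Sym2 (Fin (m + 2)) → α}
    {P Q : Fin (m + 2)} (h : IsDOrderAt L P Q) (hub : IsHubPair (Dunder (m + 2)) P Q)
    (hL : Set.InjOn L (Dunder (m + 2)).edgeSet) :
    ∃ φ : Dunder (m + 2) ≃g Dunder (m + 2), IsDLabeling (L ∘ Sym2.map φ) := by
  obtain ⟨σ, rfl, rfl, hσ⟩ := h.exists_perm_isDLabeling hub.1 fun u hu v hv huv =>
    Sym2.congr_right.1 (hL (hub.mem_edgeSet_left hu) (hub.mem_edgeSet_left hv) huv)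
  exact ⟨⟨σ, fun {a b} => by rw [hub.2, (isHubPair_Dunder m).2]; simp⟩, hσ⟩

theorem iso_Dgraph_of_isDLabeling {L : Sym2 (Fin (m + 2)) → ℕ}
    (φ : Dunder (m + 2) ≃g Dunder (m + 2)) (hφ : IsDLabeling (L ∘ Sym2.map φ)) :
    EOGraph.Iso (EOGraph.mk (m + 2) (Dunder (m + 2)) L) (Dgraph (m + 2)) := by
  refine EOGraph.iso_iff.2 ⟨φ.symm, fun e he e' he' => ?_⟩
  have map_symm (e : Sym2 (Fin (m + 2))) : Sym2.map φ (Sym2.map φ.symm e) = e := by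
    rw [Sym2.map_map]
    exact (congrArg (Sym2.map · e) φ.self_comp_symm).trans (congrFun Sym2.map_id e)
  have := hφ.sameOrderOn isDLabeling_Dgraph_label (φ.symm.map_mem_edgeSet_iff.2 he)
    (φ.symm.map_mem_edgeSet_iff.2 he')
  simp only [Function.comp_apply, map_symm] at this
  exact this

end DGraph

section HomogeneousTriangles

variable {α ι : Type*} {m : ℕ}

/-- Every triangle `i < j < k` satisfies `R` at its edge labels, taken in the order
`ij`, `ik`, `jk`. -/
def ForallTriangles [LT ι] (M : Sym2 ι → α) (R : α → α → α → Prop) : Prop :=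
  ∀ ⦃i j k⦄, i < j → j < k → R (M s(i, j)) (M s(i, k)) (M s(j, k))

theorem exists_forallTriangles_or_not (α κ : Type*) [Finite κ] (m : ℕ) :
    ∃ N, ∀ (L : Sym2 (Fin N) → α) (R : κ → α → α → α → Prop), ∃ f : Fin m ↪o Fin N,
      ∀ a, ForallTriangles (L ∘ Sym2.map f) (R a) ∨
        ForallTriangles (L ∘ Sym2.map f) fun x y z => ¬ R a x y z := by
  obtain ⟨N, hN⟩ := exists_orderEmbedding_color_const (κ → Prop) 3 m
  refine ⟨N, fun L R => ?_⟩
  obtain ⟨f, hf⟩ := hN fun t a => R a (L s(t 0, t 1)) (L s(t 0, t 2)) (L s(t 1, t 2))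
  refine ⟨f, fun a => or_iff_not_imp_left.2 fun hR i j k hij hjk hijk => hR ?_⟩
  intro i' j' k' hij' hjk'
  have := hf ![i, j, k] ![i', j', k'] (by simp [hij, hjk]) (by simp [hij', hjk'])
  exact (congrFun this a).mp hijk

theorem ForallTriangles.comp_rev {M : Sym2 (Fin m) → α} {R : α → α → α → Prop}
    (h : ForallTriangles M R) :
    ForallTriangles (M ∘ Sym2.map Fin.rev) fun x y z => R z y x := by
  intro i j k hij hjk
  simp only [Function.comp_apply, Sym2.map_mk]
  rw [Sym2.eq_swap (b := j.rev), Sym2.eq_swap (a := i.rev) (b := k.rev),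
    Sym2.eq_swap (a := j.rev) (b := k.rev)]
  exact h (Fin.rev_lt_rev.2 hjk) (Fin.rev_lt_rev.2 hij)

/-- All triangles `i < j < k` order their edges `ij`, `ik`, `jk` in the same way. -/
structure HomogeneousTriangles [LT ι] [LT α] (M : Sym2 ι → α) : Prop where
  lower : ForallTriangles M (fun ij ik _ => ij < ik) ∨ ForallTriangles M fun ij ik _ => ik < ij
  upper : ForallTriangles M (fun _ ik jk => ik < jk) ∨ ForallTriangles M fun _ ik jk => jk < ik
  outer : ForallTriangles M (fun ij _ jk => ij < jk) ∨ ForallTriangles M fun ij _ jk => jk < ij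

theorem HomogeneousTriangles.of_or_not [Preorder ι] [LinearOrder α] {M : Sym2 ι → α}
    (hM : Set.InjOn M (⊤ : SimpleGraph ι).edgeSet)
    (lower : ForallTriangles M (fun ij ik _ => ij < ik) ∨
      ForallTriangles M fun ij ik _ => ¬ ij < ik)
    (upper : ForallTriangles M (fun _ ik jk => ik < jk) ∨
      ForallTriangles M fun _ ik jk => ¬ ik < jk)
    (outer : ForallTriangles M (fun ij _ jk => ij < jk) ∨
      ForallTriangles M fun ij _ jk => ¬ ij < jk) : HomogeneousTriangles M := by
  have label_ne {i j k l : ι} (hij : i ≠ j) (hkl : k ≠ l) (h : s(i, j) ≠ s(k, l)) :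
      M s(i, j) ≠ M s(k, l) := fun heq => h (hM (by simpa using hij) (by simpa using hkl) heq)
  refine ⟨lower.imp_right ?_, upper.imp_right ?_, outer.imp_right ?_⟩
  all_goals
    refine fun h i j k hij hjk => (not_lt.1 (h hij hjk)).lt_of_ne (label_ne ?_ ?_ ?_)
    all_goals grind

theorem exists_homogeneousTriangles (α : Type*) [LinearOrder α] (m : ℕ) :
    ∃ N, ∀ L : Sym2 (Fin N) → α, Set.InjOn L (⊤ : SimpleGraph (Fin N)).edgeSet →
      ∃ f : Fin m ↪o Fin N, HomogeneousTriangles (L ∘ Sym2.map f) := by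
  obtain ⟨N, hN⟩ := exists_forallTriangles_or_not α (Fin 3) m
  refine ⟨N, fun L hL => ?_⟩
  obtain ⟨f, hf⟩ := hN L
    ![fun ij ik _ => ij < ik, fun _ ik jk => ik < jk, fun ij _ jk => ij < jk]
  have map_mem : Set.MapsTo (Sym2.map f) (⊤ : SimpleGraph (Fin m)).edgeSet
      (⊤ : SimpleGraph (Fin N)).edgeSet := fun e he =>
    (SimpleGraph.Embedding.completeGraph f.toEmbedding).map_mem_edgeSet_iff.2 he
  have inj : Set.InjOn (L ∘ Sym2.map f) (⊤ : SimpleGraph (Fin m)).edgeSet :=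
    hL.comp (Sym2.map.injective f.injective).injOn map_mem
  exact ⟨f, .of_or_not inj (hf 0) (hf 1) (hf 2)⟩

theorem homogeneousTriangles_of_le_three [LinearOrder α] (hm : m ≤ 3) {M : Sym2 (Fin m) → α}
    (hM : Set.InjOn M (⊤ : SimpleGraph (Fin m)).edgeSet) : HomogeneousTriangles M := by
  have or_not (R : α → α → α → Prop) :
      ForallTriangles M R ∨ ForallTriangles M fun x y z => ¬ R x y z := by
    refine or_iff_not_imp_left.2 fun hR i j k hij hjk hijk => hR ?_
    intro i' j' k' hij' hjk'
    obtain ⟨rfl, rfl, rfl⟩ : i = i' ∧ j = j' ∧ k = k' := by lia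
    exact hijk
  exact .of_or_not hM (or_not _) (or_not _) (or_not _)

end HomogeneousTriangles

section RamseyDLabeling

variable {α : Type*} [Preorder α] {m : ℕ} {M : Sym2 (Fin (m + 2)) → α}

theorem isDLabeling_of_forallTriangles (lower : ForallTriangles M fun ij ik _ => ij < ik)
    (upper : ForallTriangles M fun _ ik jk => ik < jk) : IsDLabeling M :=
  ⟨fun _ hi _ _ hij => lower hi hij, fun _ _ _ hj hij => upper hij hj⟩

theorem finRotate_castSucc (i : Fin m) : finRotate (m + 1) i.castSucc = i.succ := by
  rw [finRotate_apply, Fin.coeSucc_eq_succ]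

theorem isDLabeling_comp_finRotate (lower : ForallTriangles M fun ij ik _ => ij < ik)
    (outer : ForallTriangles M fun ij _ jk => jk < ij) :
    IsDLabeling (M ∘ Sym2.map (finRotate (m + 2))) := by
  have rotate_zero : finRotate (m + 2) 0 = Fin.succ 0 := finRotate_castSucc 0
  constructor <;> intro i hi j hj hij <;>
    obtain ⟨i, rfl⟩ := Fin.exists_castSucc_eq.2 (Fin.ne_last_of_lt hij)
  · replace hi : Fin.succ 0 < i.succ := Fin.succ_lt_succ_iff.2 (Fin.castSucc_lt_castSucc_iff.1 hi)
    cases j using Fin.lastCases with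
    | last =>
      simp only [Function.comp_apply, Sym2.map_mk, finRotate_castSucc, finRotate_last, rotate_zero]
      rw [Sym2.eq_swap (b := 0)]
      exact outer (Fin.succ_pos 0) hi
    | cast j =>
      simp only [Function.comp_apply, Sym2.map_mk, finRotate_castSucc, rotate_zero]
      exact lower hi (Fin.succ_lt_succ_iff.2 hij)
  · obtain ⟨j, rfl⟩ := Fin.exists_castSucc_eq.2 (Fin.ne_last_of_lt hj)
    simp only [Function.comp_apply, Sym2.map_mk, finRotate_castSucc, finRotate_last]
    rw [Sym2.eq_swap, Sym2.eq_swap (a := j.succ)]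
    exact lower i.succ_pos (Fin.succ_lt_succ_iff.2 hij)

theorem isDLabeling_comp_finRotate_symm (upper : ForallTriangles M fun _ ik jk => ik < jk)
    (outer : ForallTriangles M fun ij _ jk => jk < ij) :
    IsDLabeling (M ∘ Sym2.map (finRotate (m + 2)).symm) := by
  have symm_zero : (finRotate (m + 2)).symm 0 = Fin.last (m + 1) := by
    rw [Equiv.symm_apply_eq, finRotate_last]
  have symm_succ (i : Fin (m + 1)) : (finRotate (m + 2)).symm i.succ = i.castSucc := by
    rw [Equiv.symm_apply_eq, finRotate_castSucc]
  constructor <;> intro i hi j hj hij <;>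
    obtain ⟨j, rfl⟩ := Fin.exists_succ_eq.2 (Fin.ne_zero_of_lt hij)
  · obtain ⟨i, rfl⟩ := Fin.exists_succ_eq.2 (Fin.ne_zero_of_lt hi)
    simp only [Function.comp_apply, Sym2.map_mk, symm_zero, symm_succ]
    rw [Sym2.eq_swap, Sym2.eq_swap (b := j.castSucc)]
    exact upper (Fin.succ_lt_succ_iff.1 hij) (Fin.castSucc_lt_last j)
  · have symm_last : (finRotate (m + 2)).symm (Fin.last (m + 1)) = (Fin.last m).castSucc :=
      symm_succ (Fin.last m)
    have hj' : j < Fin.last m := Fin.succ_lt_succ_iff.1 hj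
    cases i using Fin.cases with
    | zero =>
      simp only [Function.comp_apply, Sym2.map_mk, symm_zero, symm_succ, symm_last]
      rw [Sym2.eq_swap]
      exact outer hj' (Fin.castSucc_lt_last _)
    | succ i =>
      simp only [Function.comp_apply, Sym2.map_mk, symm_succ, symm_last]
      exact upper (Fin.succ_lt_succ_iff.1 hij) hj'

theorem HomogeneousTriangles.exists_perm_isDLabeling (hM : HomogeneousTriangles M) :
    ∃ σ : Equiv.Perm (Fin (m + 2)), IsDLabeling (M ∘ Sym2.map σ) := by
  have of_rev {σ : Equiv.Perm (Fin (m + 2))}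
      (hσ : IsDLabeling ((M ∘ Sym2.map Fin.rev) ∘ Sym2.map σ)) :
      ∃ σ : Equiv.Perm (Fin (m + 2)), IsDLabeling (M ∘ Sym2.map σ) := by
    rw [Function.comp_assoc, ← Sym2.map_comp] at hσ
    exact ⟨σ.trans Fin.revPerm, hσ⟩
  rcases hM.lower with lower | lower <;> rcases hM.upper with upper | upper
  · exact ⟨Equiv.refl _, by simpa using isDLabeling_of_forallTriangles lower upper⟩
  · rcases hM.outer with outer | outer
    · exact of_rev (isDLabeling_comp_finRotate upper.comp_rev outer.comp_rev)
    · exact ⟨_, isDLabeling_comp_finRotate lower outer⟩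
  · rcases hM.outer with outer | outer
    · exact of_rev (isDLabeling_comp_finRotate_symm lower.comp_rev outer.comp_rev)
    · exact ⟨_, isDLabeling_comp_finRotate_symm upper outer⟩
  · exact of_rev (σ := Equiv.refl _)
      (by simpa using isDLabeling_of_forallTriangles upper.comp_rev lower.comp_rev)

end RamseyDLabeling

theorem exists_not_canAvoid_top_Dgraph (m : ℕ) :
    ∃ N, ¬ CanAvoid (⊤ : SimpleGraph (Fin N)) {Dgraph (m + 2)} := by
  obtain ⟨N, hN⟩ := exists_homogeneousTriangles ℕ (m + 2)
  refine ⟨N, fun ⟨L, hL, havoid⟩ => havoid _ rfl ?_⟩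
  obtain ⟨f, hf⟩ := hN L fun e he e' he' => hL e he e' he'
  obtain ⟨σ, hσ⟩ := hf.exists_perm_isDLabeling
  refine IsDLabeling.contains (f := σ.toEmbedding.trans f.toEmbedding) ?_ ?_
  · exact fun a b hab => f.injective.ne (σ.injective.ne hab.ne)
  · rwa [Function.comp_assoc, ← Sym2.map_comp] at hσ

section CanonicalLabels

variable {β : Type*} [LinearOrder β]

/-- The min ordering: edges are compared by their smaller ends, ties by increasing larger ends. -/
def minLabel (e : Sym2 β) : β ×ₗ β := toLex (e.inf, e.sup)

/-- The inverse min ordering: ties in the min ordering are broken in the opposite way. -/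
def invMinLabel (e : Sym2 β) : β ×ₗ βᵒᵈ := toLex (e.inf, OrderDual.toDual e.sup)

/-- The inverse max ordering: edges are compared by their larger ends, ties by decreasing
smaller ends. -/
def invMaxLabel (e : Sym2 β) : β ×ₗ βᵒᵈ := toLex (e.sup, OrderDual.toDual e.inf)

theorem minLabel_injective : Function.Injective (minLabel (β := β)) := fun _ _ h =>
  Sym2.inf_eq_inf_and_sup_eq_sup.1 (Prod.ext_iff.1 h)

theorem invMinLabel_injective : Function.Injective (invMinLabel (β := β)) := fun _ _ h =>
  Sym2.inf_eq_inf_and_sup_eq_sup.1 (Prod.ext_iff.1 h)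

theorem invMaxLabel_injective : Function.Injective (invMaxLabel (β := β)) := fun _ _ h =>
  Sym2.inf_eq_inf_and_sup_eq_sup.1 (Prod.ext_iff.1 h).symm

theorem minLabel_lt_iff {a b c d : β} : minLabel s(a, b) < minLabel s(c, d) ↔
    min a b < min c d ∨ min a b = min c d ∧ max a b < max c d :=
  Prod.Lex.toLex_lt_toLex

theorem invMinLabel_lt_iff {a b c d : β} : invMinLabel s(a, b) < invMinLabel s(c, d) ↔
    min a b < min c d ∨ min a b = min c d ∧ max c d < max a b :=
  Prod.Lex.toLex_lt_toLex

theorem invMaxLabel_lt_iff {a b c d : β} : invMaxLabel s(a, b) < invMaxLabel s(c, d) ↔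
    max a b < max c d ∨ max a b = max c d ∧ min c d < min a b :=
  Prod.Lex.toLex_lt_toLex

theorem minLabel_lt_iff_of_common {p q u : β} : minLabel s(p, u) < minLabel s(q, u) ↔ p < q := by
  rw [minLabel_lt_iff]
  grind

theorem invMinLabel_lt_iff_of_common {p q u : β} :
    invMinLabel s(p, u) < invMinLabel s(q, u) ↔ p < q ∧ p < u ∨ q < p ∧ u ≤ q := by
  rw [invMinLabel_lt_iff]
  grind

theorem invMaxLabel_lt_iff_of_common {p q u : β} :
    invMaxLabel s(p, u) < invMaxLabel s(q, u) ↔ p < q ∧ u < q ∨ q < p ∧ p ≤ u := by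
  rw [invMaxLabel_lt_iff]
  grind

end CanonicalLabels

section Uniqueness

variable {V α β : Type*} [Preorder α] [LinearOrder β] {G : SimpleGraph V} {P Q : V}
  {L : Sym2 V → α} {f g h : V → β}

namespace IsHubPair

theorem forall_left_lt_right (hub : IsHubPair G P Q)
    (hf : SameOrderOn G.edgeSet L (minLabel ∘ Sym2.map f)) (hPQ : f P < f Q)
    ⦃u : V⦄ (hP : u ≠ P) (hQ : u ≠ Q) : L s(P, u) < L s(Q, u) :=
  (hf (hub.mem_edgeSet_left hP) (hub.mem_edgeSet_right hQ)).2 (minLabel_lt_iff_of_common.2 hPQ)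

theorem invMin_position (hub : IsHubPair G P Q)
    (lt : ∀ ⦃u⦄, u ≠ P → u ≠ Q → L s(P, u) < L s(Q, u)) (g_inj : Function.Injective g)
    (hg : SameOrderOn G.edgeSet L (invMinLabel ∘ Sym2.map g)) :
    (g P < g Q ∧ ∀ u, u ≠ P → u ≠ Q → g P < g u) ∨
      (g Q < g P ∧ ∀ u, u ≠ P → u ≠ Q → g u < g Q) := by
  have position {u} (hP : u ≠ P) (hQ : u ≠ Q) := invMinLabel_lt_iff_of_common.1
    ((hg (hub.mem_edgeSet_left hP) (hub.mem_edgeSet_right hQ)).1 (lt hP hQ))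
  refine (g_inj.ne hub.1).lt_or_gt.imp (fun hlt => ⟨hlt, fun u hP hQ => ?_⟩)
    fun hgt => ⟨hgt, fun u hP hQ => lt_of_le_of_ne ?_ (g_inj.ne hQ)⟩
  · exact ((position hP hQ).resolve_right fun H => hlt.asymm H.1).2
  · exact ((position hP hQ).resolve_left fun H => hgt.asymm H.1).2

theorem invMax_position (hub : IsHubPair G P Q)
    (lt : ∀ ⦃u⦄, u ≠ P → u ≠ Q → L s(P, u) < L s(Q, u)) (h_inj : Function.Injective h)
    (hh : SameOrderOn G.edgeSet L (invMaxLabel ∘ Sym2.map h)) :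
    (h P < h Q ∧ ∀ u, u ≠ P → u ≠ Q → h u < h Q) ∨
      (h Q < h P ∧ ∀ u, u ≠ P → u ≠ Q → h P < h u) := by
  have position {u} (hP : u ≠ P) (hQ : u ≠ Q) := invMaxLabel_lt_iff_of_common.1
    ((hh (hub.mem_edgeSet_left hP) (hub.mem_edgeSet_right hQ)).1 (lt hP hQ))
  refine (h_inj.ne hub.1).lt_or_gt.imp (fun hlt => ⟨hlt, fun u hP hQ => ?_⟩)
    fun hgt => ⟨hgt, fun u hP hQ => lt_of_le_of_ne ?_ (h_inj.ne hP).symm⟩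
  · exact ((position hP hQ).resolve_right fun H => hlt.asymm H.1).2
  · exact ((position hP hQ).resolve_left fun H => hgt.asymm H.1).2

theorem isDOrderAt_of_position (hub : IsHubPair G P Q)
    (hg : SameOrderOn G.edgeSet L (invMinLabel ∘ Sym2.map g)) (gPQ : g P < g Q)
    (gP : ∀ u, u ≠ P → u ≠ Q → g P < g u)
    (hh : SameOrderOn G.edgeSet L (invMaxLabel ∘ Sym2.map h)) (hPQ : h P < h Q)
    (hQ : ∀ u, u ≠ P → u ≠ Q → h u < h Q) : IsDOrderAt L P Q := by
  have hub_mem := hub.mem_edgeSet_left hub.1.symm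
  have left_lt_hub ⦃u⦄ (uP : u ≠ P) (uQ : u ≠ Q) : L s(P, u) < L s(P, Q) :=
    (hh (hub.mem_edgeSet_left uP) hub_mem).2 (invMaxLabel_lt_iff.2 (by grind))
  have gQ ⦃u⦄ (uP : u ≠ P) (uQ : u ≠ Q) : g Q < g u := by
    have := invMinLabel_lt_iff.1 ((hg (hub.mem_edgeSet_left uP) hub_mem).1 (left_lt_hub uP uQ))
    grind
  refine ⟨left_lt_hub, fun u uP uQ => ?_, fun u v uP uQ vP vQ hlt => ?_⟩
  · exact (hg hub_mem (hub.mem_edgeSet_right uQ)).2 (invMinLabel_lt_iff.2 (by grind))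
  · have := invMinLabel_lt_iff.1
      ((hg (hub.mem_edgeSet_left uP) (hub.mem_edgeSet_left vP)).1 hlt)
    exact (hg (hub.mem_edgeSet_right uQ) (hub.mem_edgeSet_right vQ)).2
      (invMinLabel_lt_iff.2 (by grind))

theorem isDOrderAt (hub : IsHubPair G P Q)
    (lt : ∀ ⦃u⦄, u ≠ P → u ≠ Q → L s(P, u) < L s(Q, u))
    (g_inj : Function.Injective g) (hg : SameOrderOn G.edgeSet L (invMinLabel ∘ Sym2.map g))
    (h_inj : Function.Injective h) (hh : SameOrderOn G.edgeSet L (invMaxLabel ∘ Sym2.map h))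
    {u v : V} (huv : u ≠ v) (hu : u ≠ P ∧ u ≠ Q) (hv : v ≠ P ∧ v ≠ Q) : IsDOrderAt L P Q := by
  have hub_mem := hub.mem_edgeSet_left hub.1.symm
  have left_mem {w} (hw : w ≠ P ∧ w ≠ Q) := hub.mem_edgeSet_left hw.1
  have right_mem {w} (hw : w ≠ P ∧ w ≠ Q) := hub.mem_edgeSet_right hw.2
  rcases hub.invMin_position lt g_inj hg with ⟨gPQ, gP⟩ | ⟨gQP, gQ⟩ <;>
    rcases hub.invMax_position lt h_inj hh with ⟨hPQ, hQ⟩ | ⟨hQP, hP⟩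
  · exact hub.isDOrderAt_of_position hg gPQ gP hh hPQ hQ
  · have h_le {u v} (hu : u ≠ P ∧ u ≠ Q) (hv : v ≠ P ∧ v ≠ Q) : h u ≤ h v := not_lt.1 fun hlt =>
      have left_lt := (hg (left_mem hu) (right_mem hv)).2 (invMinLabel_lt_iff.2 (by grind))
      left_lt.asymm ((hh (right_mem hv) (left_mem hu)).2 (invMaxLabel_lt_iff.2 (by grind)))
    exact absurd ((h_le hu hv).antisymm (h_le hv hu)) (h_inj.ne huv)
  · have g_le {u v} (hu : u ≠ P ∧ u ≠ Q) (hv : v ≠ P ∧ v ≠ Q) : g v ≤ g u := not_lt.1 fun hlt =>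
      have right_lt := (hg (right_mem hu) (left_mem hv)).2 (invMinLabel_lt_iff.2 (by grind))
      right_lt.asymm ((hh (left_mem hv) (right_mem hu)).2 (invMaxLabel_lt_iff.2 (by grind)))
    exact absurd ((g_le hv hu).antisymm (g_le hu hv)) (g_inj.ne huv)
  · have right_lt_hub := (hg (right_mem hu) hub_mem).2 (invMinLabel_lt_iff.2 (by grind))
    have hub_lt_left := (hh hub_mem (left_mem hu)).2 (invMaxLabel_lt_iff.2 (by grind))
    exact absurd (right_lt_hub.trans hub_lt_left) (lt hu.1 hu.2).asymm

end IsHubPair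

end Uniqueness

theorem Dunder_eq_top {m : ℕ} (hm : m ≤ 1) : Dunder (m + 2) = ⊤ := by
  ext a b
  rw [(isHubPair_Dunder m).2, SimpleGraph.top_adj]
  grind

theorem exists_isDOrderAt_of_not_canAvoid {m N : ℕ} {G : SimpleGraph (Fin N)}
    {L : Sym2 (Fin (m + 4)) → ℕ} (hG : ¬ CanAvoid G {EOGraph.mk (m + 4) (Dunder (m + 4)) L}) :
    ∃ P Q, IsHubPair (Dunder (m + 4)) P Q ∧ IsDOrderAt L P Q := by
  obtain ⟨f, hf⟩ := exists_embedding_of_not_canAvoid hG minLabel_injective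
  obtain ⟨g, hg⟩ := exists_embedding_of_not_canAvoid hG invMinLabel_injective
  obtain ⟨h, hh⟩ := exists_embedding_of_not_canAvoid hG invMaxLabel_injective
  obtain ⟨P, Q, hub, hPQ⟩ : ∃ P Q, IsHubPair (Dunder (m + 4)) P Q ∧ f P < f Q := by
    have hub := isHubPair_Dunder (m + 2)
    rcases (f.injective.ne hub.1).lt_or_gt with hlt | hgt
    · exact ⟨_, _, hub, hlt⟩
    · exact ⟨_, _, hub.symm, hgt⟩
  obtain ⟨u, v, huv, hu, hv⟩ : ∃ u v, u ≠ v ∧ (u ≠ P ∧ u ≠ Q) ∧ v ≠ P ∧ v ≠ Q := by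
    obtain ⟨u, hu, v, hv, huv⟩ := Finset.one_lt_card.1
      (show 1 < ({P, Q}ᶜ : Finset (Fin (m + 4))).card by
        rw [Finset.card_compl, Finset.card_pair hub.1, Fintype.card_fin]; omega)
    simp only [Finset.mem_compl, Finset.mem_insert, Finset.mem_singleton, not_or] at hu hv
    exact ⟨u, v, huv, hu, hv⟩
  exact ⟨P, Q, hub, hub.isDOrderAt (hub.forall_left_lt_right hf hPQ) g.injective hg h.injective hh
    huv hu hv⟩

theorem exists_aut_isDLabeling_of_not_canAvoid {m N : ℕ} {G : SimpleGraph (Fin N)}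
    {L : Sym2 (Fin (m + 2)) → ℕ} (hL : (EOGraph.mk (m + 2) (Dunder (m + 2)) L).Valid)
    (hG : ¬ CanAvoid G {EOGraph.mk (m + 2) (Dunder (m + 2)) L}) :
    ∃ φ : Dunder (m + 2) ≃g Dunder (m + 2), IsDLabeling (L ∘ Sym2.map φ) := by
  have L_inj : Set.InjOn L (Dunder (m + 2)).edgeSet := fun e he e' he' => hL e he e' he'
  rcases le_or_gt m 1 with hm | hm
  · have complete := Dunder_eq_top hm
    obtain ⟨σ, hσ⟩ := (homogeneousTriangles_of_le_three (by lia)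
      (complete ▸ L_inj)).exists_perm_isDLabeling
    rw [complete]
    exact ⟨SimpleGraph.Iso.completeGraph σ, hσ⟩
  · obtain ⟨m, rfl⟩ := Nat.exists_eq_add_of_le' hm
    obtain ⟨P, Q, hub, h⟩ := exists_isDOrderAt_of_not_canAvoid hG
    exact h.exists_aut_isDLabeling hub L_inj

/-- For `n ≥ 2` the order chromatic number of `D_n` is finite, but for
every edge-ordering of the underlying simple graph of `D_n` that is not isomorphic (as
an edge-ordered graph) to `D_n`, the order chromatic number is infinite. -/
theorem orderChrom_Dgraph_finite_and_unique (n : ℕ) (hn : 2 ≤ n) :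
    orderChrom {Dgraph n} < ⊤ ∧
      ∀ L : Sym2 (Fin n) → ℕ, (EOGraph.mk n (Dunder n) L).Valid →
        ¬ EOGraph.Iso (EOGraph.mk n (Dunder n) L) (Dgraph n) →
        orderChrom {EOGraph.mk n (Dunder n) L} = ⊤ := by
  obtain ⟨m, rfl⟩ := Nat.exists_eq_add_of_le' hn
  refine ⟨lt_top_iff_ne_top.2 fun htop => ?_, fun L hL hiso => ?_⟩
  · obtain ⟨N, hN⟩ := exists_not_canAvoid_top_Dgraph m
    exact hN (orderChrom_eq_top_iff.1 htop N ⊤)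
  · refine orderChrom_eq_top_iff.2 fun N G => by_contra fun hG => hiso ?_
    obtain ⟨φ, hφ⟩ := exists_aut_isDLabeling_of_not_canAvoid hL hG
    exact iso_Dgraph_of_isDLabeling φ hφ
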